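/- Pull-back of classical transport solutions (Proposition 'intervaltospace'): let a > 0, let h ∈ 𝒞 with 0 ≤ h(x) ≤ a for all x ∈ X, and let V : (0,∞) × ℝ → ℝ be continuously differentiable with ∂_t V(t,y) + ∂_y V(t,y) = 0 for all t > 0 and y ∈ (0,a). Then for every t > 0 the composition V(t,·)∘h belongs to 𝒞 with ∂(V(t,·)∘h) = ((∂_y V)(t,·)∘h)•(∂h), the map t ↦ ∂(V(t,·)∘h) is continuous from (0,∞) to H, the map t ↦ v(t) := j(V(t,·)∘h) is continuously differentiable from (0,∞) to H₀ with derivative (d/dt)v(t) = j((∂_t V)(t,·)∘h) = −j((∂_y V)(t,·)∘h), and consequently, if U : H₀ → H is a linear isometry with U(j f) = f•(∂h) for all f ∈ C(X,ℝ), then ∂(V(t,·)∘h) = U(−(d/dt)v(t)), i.e. v satisfies the transport-type equation (d/dt)v(t) + U^{-1}∂(V(t,·)∘h) = 0 for all t > 0. In particular, for V̊ : ℝ → ℝ continuously differentiable, V(t,y) := V̊(y − t) satisfies the hypotheses and v(t) = j(V̊∘(h − t)) solves this equation. -/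

import Mathlib

open RealInnerProductSpace ContinuousMap

set_option synthInstance.maxHeartbeats 1000000
set_option maxHeartbeats 1000000

/-!
A `C¹` solution of `∂ₜV + ∂_yV = 0` has `∂ₜV = -∂_yV` also on the closure of the set where the
equation holds, in particular on the range of `h`. As `X` is compact, the mean value inequality,
applied at each point of `X` with a bound uniform in the point, makes `t ↦ V(t,·) ∘ h`
differentiable for the supremum norm, with derivative `∂ₜV(t,·) ∘ h`. The bounded operator `j`
carries this derivative to `H₀`, and the chain rule gives
`∂(V(t,·) ∘ h) = (∂_yV(t,·) ∘ h) • ∂h = U (j (∂_yV(t,·) ∘ h)) = U (-v'(t))`.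
-/

open Filter Set
open scoped Topology

theorem hasDerivAt_of_hasDerivAt_apply_of_continuousAt
    {X 𝕜 E : Type*} [TopologicalSpace X] [CompactSpace X] [RCLike 𝕜]
    [NormedAddCommGroup E] [NormedSpace 𝕜 E] {G G' : 𝕜 → C(X, E)} {t : 𝕜}
    (hG : ∀ᶠ s in 𝓝 t, ∀ x, HasDerivAt (fun r => G r x) (G' s x) s)
    (hG' : ContinuousAt G' t) : HasDerivAt G (G' t) t := by
  rw [hasDerivAt_iff_isLittleO, Asymptotics.isLittleO_iff]
  intro ε hε
  have hclose : ∀ᶠ s in 𝓝 t, ‖G' s - G' t‖ < ε := by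
    simpa only [dist_eq_norm] using hG'.eventually (Metric.ball_mem_nhds (G' t) hε)
  obtain ⟨δ, hδ, hball⟩ := Metric.eventually_nhds_iff_ball.1 (hG.and hclose)
  filter_upwards [Metric.ball_mem_nhds t hδ] with s hs
  refine (ContinuousMap.norm_le _ (by positivity)).2 fun x => ?_
  have hlinear : ∀ r, HasDerivAt (fun r : 𝕜 => r • G' t x) (G' t x) r := fun r => by
    simpa only [one_smul] using (hasDerivAt_id' r).smul_const (G' t x)
  have hderiv : ∀ r ∈ Metric.ball t δ, HasDerivWithinAt (fun r => G r x - r • G' t x)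
      (G' r x - G' t x) (Metric.ball t δ) r := fun r hr =>
    (((hball r hr).1 x).sub (hlinear r)).hasDerivWithinAt
  have hbound : ∀ r ∈ Metric.ball t δ, ‖G' r x - G' t x‖ ≤ ε := fun r hr =>
    ((G' r - G' t).norm_coe_le_norm x).trans (hball r hr).2.le
  have hmvt := (convex_ball t δ).norm_image_sub_le_of_norm_hasDerivWithin_le
    hderiv hbound (Metric.mem_ball_self hδ) hs
  have hremainder : (G s - G t - (s - t) • G' t) x = G s x - s • G' t x - (G t x - t • G' t x) := by
    simp only [ContinuousMap.sub_apply, ContinuousMap.smul_apply, sub_smul]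
    abel
  rwa [hremainder]

section PullbackCurve

variable {X Y T E : Type*} [TopologicalSpace X] [TopologicalSpace Y]

/-- The curve `t ↦ W(t,·) ∘ h` in `C(X, E)`. At times `t` for which `W(t,·) ∘ h` is not continuous
it takes the junk value `0`. -/
noncomputable def pullbackCurve [TopologicalSpace E] [Zero E]
    (h : C(X, Y)) (W : T → Y → E) (t : T) : C(X, E) :=
  mkD (fun x => W t (h x)) 0

theorem pullbackCurve_apply [TopologicalSpace E] [Zero E]
    (h : C(X, Y)) {W : T → Y → E} {t : T} (hW : Continuous (W t)) (x : X) :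
    pullbackCurve h W t x = W t (h x) :=
  mkD_apply_of_continuous (hW.comp h.continuous)

theorem continuousOn_pullbackCurve [TopologicalSpace T] [TopologicalSpace E] [Zero E]
    (h : C(X, Y)) {W : T → Y → E} {I : Set T} (hW : ContinuousOn (Function.uncurry W) (I ×ˢ univ)) :
    ContinuousOn (pullbackCurve h W) I :=
  continuousOn_mkD_of_uncurry (fun t x => W t (h x)) 0 <|
    hW.comp (f := fun p : T × X => (p.1, h p.2)) (by fun_prop) fun _ hp => ⟨hp.1, mem_univ _⟩

theorem pullbackCurve_eq_neg_of_mem_closure [TopologicalSpace E] [AddGroup E]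
    [IsTopologicalAddGroup E] [T2Space E] (h : C(X, Y)) {W₁ W₂ : T → Y → E} {t : T} {S : Set Y}
    (hS : ∀ x, h x ∈ closure S) (hW₁ : Continuous (W₁ t)) (hW₂ : Continuous (W₂ t))
    (hsum : ∀ y ∈ S, W₁ t y + W₂ t y = 0) :
    pullbackCurve h W₁ t = -pullbackCurve h W₂ t := by
  have hclosure : EqOn (W₁ t) (-W₂ t) (closure S) :=
    EqOn.closure (fun y hy => eq_neg_of_add_eq_zero_left (hsum y hy)) hW₁ hW₂.neg
  ext x
  rw [ContinuousMap.neg_apply, pullbackCurve_apply h hW₁, pullbackCurve_apply h hW₂]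
  exact hclosure (hS x)

theorem hasDerivAt_pullbackCurve {𝕜 : Type*} [RCLike 𝕜] [CompactSpace X]
    [NormedAddCommGroup E] [NormedSpace 𝕜 E] (h : C(X, Y)) {W W' : 𝕜 → Y → E} {I : Set 𝕜}
    (hI : IsOpen I) (hW : ∀ t ∈ I, Continuous (W t))
    (hderiv : ∀ t ∈ I, ∀ y, HasDerivAt (fun s => W s y) (W' t y) t)
    (hW' : ContinuousOn (Function.uncurry W') (I ×ˢ univ)) {t : 𝕜} (ht : t ∈ I) :
    HasDerivAt (pullbackCurve h W) (pullbackCurve h W' t) t := by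
  refine hasDerivAt_of_hasDerivAt_apply_of_continuousAt ?_
    ((continuousOn_pullbackCurve h hW').continuousAt (hI.mem_nhds ht))
  filter_upwards [hI.mem_nhds ht] with s hs x
  rw [pullbackCurve_apply h (continuousOn_univ.1 (hW'.uncurry_left s hs))]
  refine (hderiv s hs (h x)).congr_of_eventuallyEq ?_
  filter_upwards [hI.mem_nhds hs] with r hr
  exact pullbackCurve_apply h (hW r hr) x

end PullbackCurve

/-- `V` has the partial derivatives `Vt` and `Vy` at the points of `I × ℝ`, and both are continuous
there. For open `I` this says that `V` is `C¹` on `I × ℝ`. -/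
structure HasContinuousPartialsOn (I : Set ℝ) (V Vt Vy : ℝ → ℝ → ℝ) : Prop where
  hasDerivAt_time : ∀ t ∈ I, ∀ y, HasDerivAt (fun s => V s y) (Vt t y) t
  hasDerivAt_space : ∀ t ∈ I, ∀ y, HasDerivAt (V t) (Vy t y) y
  continuousOn_time : ContinuousOn (Function.uncurry Vt) (I ×ˢ univ)
  continuousOn_space : ContinuousOn (Function.uncurry Vy) (I ×ˢ univ)

namespace HasContinuousPartialsOn

variable {I : Set ℝ} {V Vt Vy : ℝ → ℝ → ℝ} {t : ℝ}

theorem continuous_slice (hV : HasContinuousPartialsOn I V Vt Vy) (ht : t ∈ I) :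
    Continuous (V t) :=
  continuous_iff_continuousAt.2 fun y => (hV.hasDerivAt_space t ht y).continuousAt

theorem continuous_time_slice (hV : HasContinuousPartialsOn I V Vt Vy) (ht : t ∈ I) :
    Continuous (Vt t) :=
  continuousOn_univ.1 (hV.continuousOn_time.uncurry_left t ht)

theorem continuous_space_slice (hV : HasContinuousPartialsOn I V Vt Vy) (ht : t ∈ I) :
    Continuous (Vy t) :=
  continuousOn_univ.1 (hV.continuousOn_space.uncurry_left t ht)

theorem travelling_wave (I : Set ℝ) {V₀ V₀' : ℝ → ℝ} (hV₀ : ∀ y, HasDerivAt V₀ (V₀' y) y)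
    (hV₀' : Continuous V₀') :
    HasContinuousPartialsOn I (fun t y => V₀ (y - t)) (fun t y => -V₀' (y - t))
      (fun t y => V₀' (y - t)) where
  hasDerivAt_time t _ y := (hV₀ (y - t)).comp_const_sub y t
  hasDerivAt_space t _ y := (hV₀ (y - t)).comp_sub_const y t
  continuousOn_time := by unfold Function.uncurry; fun_prop
  continuousOn_space := by unfold Function.uncurry; fun_prop

end HasContinuousPartialsOn

section Transport

variable {X H H₀ : Type*} [TopologicalSpace X] {𝒞 : Set C(X, ℝ)}

/-- The chain rule at `h` for an operator `par` (written `∂`) on `𝒞`: for every `C¹` function `F`,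
`F ∘ h` is in `𝒞` and `∂(F ∘ h) = (F' ∘ h) • ∂h`. -/
def HasChainRuleAt (act : C(X, ℝ) → H → H) (par : 𝒞 → H) (h : 𝒞) : Prop :=
  ∀ F F' : ℝ → ℝ, (∀ y, HasDerivAt F (F' y) y) → Continuous F' →
    ∃ c : 𝒞, (∀ x, (c : C(X, ℝ)) x = F ((h : C(X, ℝ)) x)) ∧
      ∀ c' : C(X, ℝ), (∀ x, c' x = F' ((h : C(X, ℝ)) x)) → par c = act c' (par h)

variable {act : C(X, ℝ) → H → H} {par : 𝒞 → H} {h : 𝒞} {I : Set ℝ} {V Vt Vy : ℝ → ℝ → ℝ}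

theorem HasChainRuleAt.exists_lift_pullbackCurve (hchain : HasChainRuleAt act par h)
    (hV : HasContinuousPartialsOn I V Vt Vy) :
    ∃ comp : ℝ → 𝒞, ∀ t ∈ I, (comp t : C(X, ℝ)) = pullbackCurve h V t ∧
      par (comp t) = act (pullbackCurve h Vy t) (par h) := by
  have : Nonempty 𝒞 := ⟨h⟩
  have hlift : ∀ t ∈ I, ∃ c : 𝒞, (c : C(X, ℝ)) = pullbackCurve h V t ∧
      par c = act (pullbackCurve h Vy t) (par h) := fun t ht => by
    obtain ⟨c, hc, hpar⟩ :=
      hchain (V t) (Vy t) (hV.hasDerivAt_space t ht) (hV.continuous_space_slice ht)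
    refine ⟨c, ?_, hpar _ (pullbackCurve_apply _ (hV.continuous_space_slice ht))⟩
    ext x
    rw [hc, pullbackCurve_apply _ (hV.continuous_slice ht)]
  choose! comp hcomp using hlift
  exact ⟨comp, hcomp⟩

variable [CompactSpace X] [NormedAddCommGroup H] [NormedSpace ℝ H]
  [NormedAddCommGroup H₀] [NormedSpace ℝ H₀] {j : C(X, ℝ) →L[ℝ] H₀} {U : H₀ →L[ℝ] H}

theorem HasChainRuleAt.exists_lift_transport (hchain : HasChainRuleAt act par h)
    (hU : ∀ f, U (j f) = act f (par h)) (hI : IsOpen I)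
    (hV : HasContinuousPartialsOn I V Vt Vy)
    (htransport : ∀ t ∈ I, pullbackCurve (h : C(X, ℝ)) Vt t = -pullbackCurve h Vy t) :
    ∃ comp : ℝ → 𝒞, ∀ t ∈ I, (∀ x, (comp t : C(X, ℝ)) x = V t ((h : C(X, ℝ)) x)) ∧
      par (comp t) = act (pullbackCurve h Vy t) (par h) ∧
      HasDerivAt (fun s => j (comp s)) (j (pullbackCurve h Vt t)) t ∧
      par (comp t) = U (-j (pullbackCurve h Vt t)) := by
  obtain ⟨comp, hcomp⟩ := hchain.exists_lift_pullbackCurve hV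
  refine ⟨comp, fun t ht => ⟨fun x => ?_, (hcomp t ht).2, ?_, ?_⟩⟩
  · rw [(hcomp t ht).1, pullbackCurve_apply _ (hV.continuous_slice ht)]
  · have hcurve := hasDerivAt_pullbackCurve (h : C(X, ℝ)) hI (fun _ => hV.continuous_slice)
      hV.hasDerivAt_time hV.continuousOn_time ht
    refine (j.hasFDerivAt.comp_hasDerivAt t hcurve).congr_of_eventuallyEq ?_
    filter_upwards [hI.mem_nhds ht] with s hs
    exact congrArg j (hcomp s hs).1
  · rw [(hcomp t ht).2, ← hU, htransport t ht, map_neg j, neg_neg]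

theorem stmt_17_general {S : Set ℝ} (hchain : HasChainRuleAt act par h)
    (hS : ∀ x, (h : C(X, ℝ)) x ∈ closure S) (hU : ∀ f, U (j f) = act f (par h)) (hI : IsOpen I)
    (hV : HasContinuousPartialsOn I V Vt Vy) (hpde : ∀ t ∈ I, ∀ y ∈ S, Vt t y + Vy t y = 0) :
    (∃ (comp : ℝ → 𝒞) (tcomp dcomp : ℝ → C(X, ℝ)),
      (∀ t ∈ I, ∀ x, (comp t : C(X, ℝ)) x = V t ((h : C(X, ℝ)) x)) ∧
      (∀ t ∈ I, ∀ x, tcomp t x = Vt t ((h : C(X, ℝ)) x)) ∧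
      (∀ t ∈ I, ∀ x, dcomp t x = Vy t ((h : C(X, ℝ)) x)) ∧
      (∀ t ∈ I, par (comp t) = act (dcomp t) (par h)) ∧
      ContinuousOn (fun t => par (comp t)) I ∧
      (∀ t ∈ I, HasDerivAt (fun s => j (comp s)) (j (tcomp t)) t) ∧
      (∀ t ∈ I, j (tcomp t) = -j (dcomp t)) ∧
      ContinuousOn (fun t => j (tcomp t)) I ∧
      (∀ t ∈ I, par (comp t) = U (-j (tcomp t)))) ∧
    (∀ V₀ V₀' : ℝ → ℝ, (∀ y, HasDerivAt V₀ (V₀' y) y) → Continuous V₀' →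
      ∃ (comp : ℝ → 𝒞) (tcomp : ℝ → C(X, ℝ)),
        (∀ t ∈ I, ∀ x, (comp t : C(X, ℝ)) x = V₀ ((h : C(X, ℝ)) x - t)) ∧
        (∀ t ∈ I, ∀ x, tcomp t x = -V₀' ((h : C(X, ℝ)) x - t)) ∧
        (∀ t ∈ I, HasDerivAt (fun s => j (comp s)) (j (tcomp t)) t) ∧
        (∀ t ∈ I, par (comp t) = U (-j (tcomp t)))) := by
  constructor
  · have htransport : ∀ t ∈ I, pullbackCurve (h : C(X, ℝ)) Vt t = -pullbackCurve h Vy t :=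
      fun t ht => pullbackCurve_eq_neg_of_mem_closure _ hS (hV.continuous_time_slice ht)
        (hV.continuous_space_slice ht) (hpde t ht)
    obtain ⟨comp, hcomp⟩ := hchain.exists_lift_transport hU hI hV htransport
    have hcont : ContinuousOn (fun t => j (pullbackCurve h Vt t)) I :=
      j.continuous.comp_continuousOn (continuousOn_pullbackCurve _ hV.continuousOn_time)
    exact ⟨comp, pullbackCurve h Vt, pullbackCurve h Vy, fun t ht => (hcomp t ht).1,
      fun t ht => pullbackCurve_apply _ (hV.continuous_time_slice ht),
      fun t ht => pullbackCurve_apply _ (hV.continuous_space_slice ht),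
      fun t ht => (hcomp t ht).2.1,
      (U.continuous.comp_continuousOn hcont.neg).congr fun t ht => (hcomp t ht).2.2.2,
      fun t ht => (hcomp t ht).2.2.1, fun t ht => by rw [htransport t ht, map_neg], hcont,
      fun t ht => (hcomp t ht).2.2.2⟩
  · intro V₀ V₀' hV₀ hV₀'
    have hwave := HasContinuousPartialsOn.travelling_wave I hV₀ hV₀'
    obtain ⟨comp, hcomp⟩ := hchain.exists_lift_transport hU hI hwave fun t ht =>
      pullbackCurve_eq_neg_of_mem_closure (S := univ) _ (fun x => subset_closure (mem_univ _))
        (hwave.continuous_time_slice ht) (hwave.continuous_space_slice ht)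
        fun y _ => neg_add_cancel (V₀' (y - t))
    exact ⟨comp, pullbackCurve h fun t y => -V₀' (y - t), fun t ht => (hcomp t ht).1,
      fun t ht => pullbackCurve_apply _ (hwave.continuous_time_slice ht),
      fun t ht => (hcomp t ht).2.2.1, fun t ht => (hcomp t ht).2.2.2⟩

end Transport

/-- **Pull-back of classical transport solutions** (Proposition `intervaltospace`):
let `a > 0`, `h ∈ 𝒞` with `0 ≤ h ≤ a`, and let `V : (0,∞) × ℝ → ℝ` be continuously
differentiable with `∂ₜV + ∂_yV = 0` on `(0,∞) × (0,a)`.  Then for every `t > 0` the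
composition `V(t,·)∘h` belongs to `𝒞` with `∂(V(t,·)∘h) = ((∂_yV)(t,·)∘h)•(∂h)`,
`t ↦ ∂(V(t,·)∘h)` is continuous on `(0,∞)`, `t ↦ v(t) := j(V(t,·)∘h)` is continuously
differentiable on `(0,∞)` with `v'(t) = j((∂ₜV)(t,·)∘h) = −j((∂_yV)(t,·)∘h)`, and if
`U : H₀ → H` is a linear isometry with `U(j f) = f•(∂h)` then `∂(V(t,·)∘h) = U(−v'(t))`,
i.e. `v` solves the transport-type equation.  In particular, for `V̊ ∈ C¹(ℝ)` the choice
`V(t,y) := V̊(y − t)` satisfies the hypotheses and `v(t) = j(V̊∘(h − t))` solves the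
equation. -/
theorem stmt_17
    {X : Type*} [MetricSpace X] [CompactSpace X]
    {H : Type*} [NormedAddCommGroup H] [InnerProductSpace ℝ H] [CompleteSpace H]
    {H₀ : Type*} [NormedAddCommGroup H₀] [InnerProductSpace ℝ H₀] [CompleteSpace H₀]
    (𝒞 : Subalgebra ℝ C(X, ℝ))
    (act : C(X, ℝ) →ₗ[ℝ] H →ₗ[ℝ] H)
    (hact_one : ∀ v : H, act 1 v = v)
    (hact_symm : ∀ (f : C(X, ℝ)) (v w : H), ⟪act f v, w⟫ = ⟪v, act f w⟫)
    (hact_bound : ∀ (f : C(X, ℝ)) (v : H), ‖act f v‖ ≤ ‖f‖ * ‖v‖)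
    (par : 𝒞 →ₗ[ℝ] H)
    (hLeibniz : ∀ f g : 𝒞, par (f * g) = act (f : C(X, ℝ)) (par g) + act (g : C(X, ℝ)) (par f))
    (a : ℝ) (ha : 0 < a)
    (h : 𝒞) (hh0 : ∀ x : X, 0 ≤ (h : C(X, ℝ)) x) (hha : ∀ x : X, (h : C(X, ℝ)) x ≤ a)
    -- chain rule law for `h`
    (hchain : ∀ F F' : ℝ → ℝ, (∀ y : ℝ, HasDerivAt F (F' y) y) → Continuous F' →
      ∃ c : 𝒞, (∀ x : X, (c : C(X, ℝ)) x = F ((h : C(X, ℝ)) x)) ∧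
        ∀ c' : C(X, ℝ), (∀ x : X, c' x = F' ((h : C(X, ℝ)) x)) → par c = act c' (par h))
    (j : C(X, ℝ) →ₗ[ℝ] H₀)
    (hj : ∀ f : C(X, ℝ), ‖j f‖ ≤ ‖f‖ * ‖par h‖)
    (U : H₀ →ₗᵢ[ℝ] H) (hU : ∀ f : C(X, ℝ), U (j f) = act f (par h))
    -- the classical solution `V` and its partial derivatives
    (V Vt Vy : ℝ → ℝ → ℝ)
    (hVt : ∀ t > (0 : ℝ), ∀ y : ℝ, HasDerivAt (fun s => V s y) (Vt t y) t)
    (hVy : ∀ t > (0 : ℝ), ∀ y : ℝ, HasDerivAt (fun z => V t z) (Vy t y) y)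
    (hVtc : ContinuousOn (fun p : ℝ × ℝ => Vt p.1 p.2) (Set.Ioi 0 ×ˢ Set.univ))
    (hVyc : ContinuousOn (fun p : ℝ × ℝ => Vy p.1 p.2) (Set.Ioi 0 ×ˢ Set.univ))
    (hpde : ∀ t > (0 : ℝ), ∀ y ∈ Set.Ioo (0 : ℝ) a, Vt t y + Vy t y = 0) :
    -- the pulled back solution `comp t = V(t,·)∘h ∈ 𝒞`, with `tcomp t = (∂ₜV)(t,·)∘h`
    -- and `dcomp t = (∂_yV)(t,·)∘h`
    (∃ (comp : ℝ → 𝒞) (tcomp dcomp : ℝ → C(X, ℝ)),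
      (∀ t, 0 < t → ∀ x : X, ((comp t : 𝒞) : C(X, ℝ)) x = V t ((h : C(X, ℝ)) x)) ∧
      (∀ t, 0 < t → ∀ x : X, tcomp t x = Vt t ((h : C(X, ℝ)) x)) ∧
      (∀ t, 0 < t → ∀ x : X, dcomp t x = Vy t ((h : C(X, ℝ)) x)) ∧
      -- `∂(V(t,·)∘h) = ((∂_yV)(t,·)∘h)•(∂h)`
      (∀ t, 0 < t → par (comp t) = act (dcomp t) (par h)) ∧
      -- `t ↦ ∂(V(t,·)∘h)` is continuous from `(0,∞)` to `H`
      ContinuousOn (fun t => par (comp t)) (Set.Ioi 0) ∧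
      -- `t ↦ v(t) = j(V(t,·)∘h)` is differentiable with `v'(t) = j((∂ₜV)(t,·)∘h)`
      (∀ t, 0 < t → HasDerivAt (fun s => j ((comp s : 𝒞) : C(X, ℝ))) (j (tcomp t)) t) ∧
      -- `v'(t) = −j((∂_yV)(t,·)∘h)`
      (∀ t, 0 < t → j (tcomp t) = -(j (dcomp t))) ∧
      -- the derivative is continuous, i.e. `v ∈ C¹((0,∞), H₀)`
      ContinuousOn (fun t => j (tcomp t)) (Set.Ioi 0) ∧
      -- the transport-type equation `∂(V(t,·)∘h) = U(−v'(t))`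
      (∀ t, 0 < t → par (comp t) = U (-(j (tcomp t))))) ∧
    -- in particular: for `V̊ ∈ C¹(ℝ)` the function `v(t) = j(V̊∘(h − t))` solves the equation
    (∀ V0 V0' : ℝ → ℝ, (∀ y : ℝ, HasDerivAt V0 (V0' y) y) → Continuous V0' →
      ∃ (comp : ℝ → 𝒞) (tcomp : ℝ → C(X, ℝ)),
        (∀ t, 0 < t → ∀ x : X, ((comp t : 𝒞) : C(X, ℝ)) x = V0 ((h : C(X, ℝ)) x - t)) ∧
        (∀ t, 0 < t → ∀ x : X, tcomp t x = -V0' ((h : C(X, ℝ)) x - t)) ∧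
        (∀ t, 0 < t → HasDerivAt (fun s => j ((comp s : 𝒞) : C(X, ℝ))) (j (tcomp t)) t) ∧
        (∀ t, 0 < t → par (comp t) = U (-(j (tcomp t))))) :=
  stmt_17_general (act := fun f v => act f v) (U := U.toContinuousLinearMap)
    (j := j.mkContinuous ‖par h‖ fun f => (hj f).trans_eq (mul_comm _ _)) hchain
    (fun x => closure_Ioo ha.ne ▸ ⟨hh0 x, hha x⟩) hU isOpen_Ioi ⟨hVt, hVy, hVtc, hVyc⟩ hpde
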